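/- arXiv:2405.02107 — 4 statements merged into one kernel-verified Lean document; each statement's English description precedes it below -/
import Mathlib

section
/- For any sequence of 2^k vectors r_1, ..., r_{2^k} in F_2^k, there exist two bijections (permutations) a, b : {1,...,2^k} → F_2^k such that r_i = a(i) + b(i) for all i ≥ 2 and r_1 = a(1). (Consequence of Hall's 1952 theorem on complete mappings of abelian groups, specialized to F_2^k.) -/
/-!
The result holds for every finite abelian group `G` indexed by a type `ι` with a base index `q`:
all sums `a i + c i` with `i ≠ q` can be prescribed, by Hall's 1952 exchange argument.

Starting from `c = -a`, where all sums vanish, the prescribed values are installed one index at a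
time, the sum at `q` being left free. To install the value `r p` at an index `p`, the element `a p`
has to be matched with `r p - a p`. If that element is `c p` or `c q`, at most one swap of `c`
suffices. Otherwise it is `c j` for a third index `j`: give `c j` to `p`, so that `j` becomes the
index to be repaired, and hand the element `a q` to `j`, keeping the former `a j` at `q`. The
quantity `K = a p + a q - r p` does not change in this process, so the elements successively held
by the index under repair form a sequence `x₀, x₁, x₂, …` in which `xₜ` gets matched with
`xₜ₊₁ - K`. The element `xₜ₊₂` is the one displaced from `xₜ₊₁ - K`, whereas `x₀, …, xₜ₋₁` are
matched with `x₁ - K, …, xₜ - K`; hence no element recurs and the process stops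
(`exists_repair_aux`). Adding a constant to `a` and subtracting it from `c` finally normalizes
`a q`.
-/

/-- Termination of the exchange process. The finset `U` holds the elements `x₀, …, xₜ` met so far;
it contains the current `a p = xₜ` but not `a q = xₜ₊₁`, and by `hU` every element of `U` in
place at an index other than `p` and `q` is matched with an element of `U - K`. Every exchange
enlarges `U` by one element, so the induction is on the size `m` of its complement. -/
lemma exists_repair_aux {ι G : Type*} [DecidableEq ι] [AddCommGroup G] [Fintype G] [DecidableEq G]
    (r : ι → G) (q : ι) (K : G) (m : ℕ) :
    ∀ (U : Finset G) (a c : ι ≃ G) (p : ι), Fintype.card G - U.card = m → p ≠ q →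
      (∀ i, i ≠ p → i ≠ q → a i + c i = r i) → a p + a q - r p = K →
      a p ∈ U → a q ∉ U → (∀ i, i ≠ p → i ≠ q → a i ∈ U → c i + K ∈ U) →
      ∃ a' c' : ι ≃ G, ∀ i, i ≠ q → a' i + c' i = r i := by
  induction m with
  | zero =>
    intro U a c p hm _ _ _ _ hq _
    have h1 : U.card < Fintype.card G :=
      Finset.card_lt_univ_of_notMem hq
    omega
  | succ m ih =>
    intro U a c p hm hpq hr hK hp hq hU
    obtain ⟨j, hj⟩ := c.surjective (r p - a p)
    by_cases hjp : j = p
    · subst hjp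
      refine ⟨a, c, fun i hi => ?_⟩
      by_cases hij : i = j
      · subst hij
        rw [hj]; abel
      · exact hr i hij hi
    by_cases hjq : j = q
    · subst hjq
      refine ⟨a, (Equiv.swap p j).trans c, fun i hi => ?_⟩
      by_cases hip : i = p
      · subst hip
        simp [hj]
      · simp [Equiv.swap_apply_of_ne_of_ne hip hi, hr i hip hi]
    have hcj : c j + K = a q := by rw [hj, ← hK]; abel
    have haj : a j ∉ U := fun h => hq (hcj ▸ hU j hjp hjq h)
    have hajq : a j ≠ a q := fun h => hjq (a.injective h)
    refine ih (insert (a q) U) ((Equiv.swap q j).trans a) ((Equiv.swap p j).trans c) j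
      ?_ hjq ?_ ?_ ?_ ?_ ?_
    · rw [Finset.card_insert_of_notMem hq]; omega
    · intro i hij hiq
      by_cases hip : i = p
      · subst hip
        simp [Equiv.swap_apply_of_ne_of_ne hiq hij, hj]
      · simp [Equiv.swap_apply_of_ne_of_ne hiq hij, Equiv.swap_apply_of_ne_of_ne hip hij,
          hr i hip hiq]
    · have hrj := hr j hjp hjq
      simp only [Equiv.trans_apply, Equiv.swap_apply_right, Equiv.swap_apply_left]
      rw [← hrj, hj, ← hK]; abel
    · simp
    · simp [hajq, haj]
    · intro i hij hiq
      by_cases hip : i = p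
      · subst hip
        simp [hcj]
      · have hne : a i ≠ a q := fun h => hiq (a.injective h)
        simp only [Equiv.trans_apply, Equiv.swap_apply_of_ne_of_ne hiq hij,
          Equiv.swap_apply_of_ne_of_ne hip hij, Finset.mem_insert, hne, false_or]
        exact fun h => Or.inr (hU i hip hiq h)

/-- If `a + c` agrees with `r` away from `p` and `q`, then some pair of bijections has sum `r`
away from `q` alone. -/
lemma exists_repair {ι G : Type*} [AddCommGroup G] [Fintype G]
    (r : ι → G) (p q : ι) (hpq : p ≠ q) (a c : ι ≃ G)
    (h : ∀ i, i ≠ p → i ≠ q → a i + c i = r i) :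
    ∃ a' c' : ι ≃ G, ∀ i, i ≠ q → a' i + c' i = r i := by
  classical
  refine exists_repair_aux r q _ _ {a p} a c p rfl hpq h rfl (by simp) ?_ ?_
  · simpa using hpq.symm
  · intro i hip _ hi
    exact absurd (by simpa using hi) hip

lemma exists_add_eq_of_ne {ι G : Type*} [AddCommGroup G] [Fintype G] [Fintype ι]
    (e : ι ≃ G) (r : ι → G) (q : ι) :
    ∃ a c : ι ≃ G, ∀ i, i ≠ q → a i + c i = r i := by
  classical
  -- `S` is the set of indices at which the prescribed value has already replaced `0`.
  have key : ∀ S : Finset ι, ∃ a c : ι ≃ G, ∀ i, i ≠ q →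
      a i + c i = if i ∈ S then r i else 0 := by
    intro S
    induction S using Finset.induction_on with
    | empty => exact ⟨e, e.trans (Equiv.neg G), by simp⟩
    | insert p S _ ih =>
      obtain ⟨a, c, h⟩ := ih
      by_cases hpq : p = q
      · refine ⟨a, c, fun i hi => ?_⟩
        rw [h i hi]
        simp [hpq, hi]
      · refine exists_repair _ p q hpq a c fun i hip hi => ?_
        rw [h i hi]
        simp [hip]
  simpa using key Finset.univ

/-- For any sequence of `2^k` vectors in `F_2^k`, there exist two
bijections `a b : Fin (2^k) → F_2^k` with `r i = a i + b i` for all `i ≠ 0`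
(i.e. all indices `i ≥ 2` in one-based numbering) and `r 0 = a 0`. -/
theorem equal_requests_hall_complete_mapping (k : ℕ) (r : Fin (2 ^ k) → (Fin k → ZMod 2)) :
    ∃ a b : Fin (2 ^ k) → (Fin k → ZMod 2),
      Function.Bijective a ∧ Function.Bijective b ∧
      r 0 = a 0 ∧ ∀ i : Fin (2 ^ k), i ≠ 0 → r i = a i + b i := by
  have e : Fin (2 ^ k) ≃ (Fin k → ZMod 2) := Fintype.equivOfCardEq (by simp [ZMod.card])
  obtain ⟨a, c, h⟩ := exists_add_eq_of_ne e r 0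
  refine ⟨a.trans (Equiv.addRight (r 0 - a 0)), c.trans (Equiv.subRight (r 0 - a 0)),
    Equiv.bijective _, Equiv.bijective _, by simp, fun i hi => ?_⟩
  rw [← h i hi]
  simp only [Equiv.trans_apply, Equiv.coe_addRight, Equiv.subRight_apply]
  abel
end

section
/- In the abelian group F_2^k, for any sequence s_1, ..., s_{2^k} of elements with s_1 + s_2 + ... + s_{2^k} = 0, there exist two bijections a, b : {1,...,2^k} → F_2^k such that s_i = a(i) - b(i) (equivalently a(i) + b(i), since the group has exponent 2) for every i. -/
/-!
The argument works for any finite abelian group `G` and is an exchange argument. Call `d : ι → G`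
representable if `d = b - a` for bijections `a b : ι ≃ G`. The zero sequence is representable, and
any zero-sum sequence is reached from it by changing two entries at a time with their sum
preserved, so it suffices that such a change preserves representability (`representable_exchange`).

Say the entries at `p` and `q` change, the new ones being `d p` and `d q`. Put
`C = a p + a q + d p` and let `ψ` be the permutation of the indices with `b (ψ i) = C - a i`.
If `p` and `q` lie in different cycles of `ψ`, let `c` be the cycle of `ψ` through `p`. Moving
the `a`-values one step along `c`, with `q` spliced in between `p` and its predecessor, turns
`a + d` into exactly `b ∘ c`, which is again a bijection (`representable_of_not_sameCycle`).
If `p` and `q` lie in the same cycle of `ψ`, then exchanging `b p` and `b q` replaces `ψ` by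
`swap p q * ψ`, which separates the two indices (`not_sameCycle_swap_mul`).
-/

/-- Left multiplication by `swap p q` splits a cycle containing both `p` and `q`. -/
lemma not_sameCycle_swap_mul {ι : Type*} [Finite ι] [DecidableEq ι] {p q : ι} (hpq : p ≠ q)
    (f : Equiv.Perm ι) (h : f.SameCycle p q) : ¬ (Equiv.swap p q * f).SameCycle p q := by
  classical
  have hex : ∃ n : ℕ, (f ^ n) p = q := h.exists_nat_pow_eq
  obtain ⟨r, hr, hmin⟩ : ∃ r : ℕ, (f ^ r) p = q ∧ ∀ m < r, (f ^ m) p ≠ q :=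
    ⟨Nat.find hex, Nat.find_spec hex, fun m hm => Nat.find_min hex hm⟩
  have hr0 : 0 < r := by
    rcases Nat.eq_zero_or_pos r with h0 | h0
    · subst h0; exact absurd hr hpq
    · exact h0
  have hp : ∀ i, 0 < i → i ≤ r → (f ^ i) p ≠ p := by
    intro i hi hir hfix
    apply hmin (r - i) (by omega)
    have h2 : (f ^ (r - i + i)) p = q := by rwa [Nat.sub_add_cancel hir]
    rwa [pow_add, Equiv.Perm.mul_apply, hfix] at h2
  -- The new permutation follows the `f`-orbit of `p` and jumps back to `p` instead of reaching `q`.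
  have hagree : ∀ i < r, ((Equiv.swap p q * f) ^ i) p = (f ^ i) p := by
    intro i
    induction i with
    | zero => intro _; rfl
    | succ i ih =>
      intro hi
      rw [pow_succ', Equiv.Perm.mul_apply, ih (by omega), Equiv.Perm.mul_apply,
        ← Equiv.Perm.mul_apply f, ← pow_succ',
        Equiv.swap_apply_of_ne_of_ne (hp _ (by omega) (by omega)) (hmin _ hi)]
  have hclose : ((Equiv.swap p q * f) ^ r) p = p := by
    obtain ⟨t, rfl⟩ : ∃ t, r = t + 1 := ⟨r - 1, by omega⟩
    rw [pow_succ', Equiv.Perm.mul_apply, hagree t (by omega), Equiv.Perm.mul_apply,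
      ← Equiv.Perm.mul_apply f, ← pow_succ', hr, Equiv.swap_apply_right]
  intro hs
  obtain ⟨n, hn⟩ := hs.exists_nat_pow_eq
  have hmod : ((Equiv.swap p q * f) ^ (n % r)) p = q := by
    rw [← Nat.mod_add_div n r, pow_add, Equiv.Perm.mul_apply, pow_mul,
      Equiv.Perm.pow_apply_eq_self_of_apply_eq_self hclose] at hn
    exact hn
  have hlt := Nat.mod_lt n hr0
  rw [hagree _ hlt] at hmod
  exact hmin _ hlt hmod

/-- The shift along a cycle. The values `b p` and `b q` are constrained only through their sum, so
that the lemma applies also after exchanging them. -/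
lemma representable_of_not_sameCycle {ι G : Type*} [Finite ι] [DecidableEq ι] [AddCommGroup G]
    {p q : ι} (hpq : p ≠ q) (d : ι → G) (a b : ι ≃ G)
    (hd : ∀ i, i ≠ p → i ≠ q → d i = b i - a i)
    (hsum : a p + a q + d p + d q = b p + b q)
    (ψ : Equiv.Perm ι) (hψ : ∀ i, b (ψ i) = a p + a q + d p - a i)
    (hc : ¬ ψ.SameCycle p q) :
    ∃ a' b' : ι ≃ G, ∀ i, d i = b' i - a' i := by
  classical
  have := Fintype.ofFinite ι
  set c := ψ.cycleOf p with hcdef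
  have hcin : ∀ i, ψ.SameCycle p i → c i = ψ i := fun i hi => hi.cycleOf_apply
  have hcout : ∀ i, ¬ ψ.SameCycle p i → c i = i := fun i hi =>
    Equiv.Perm.cycleOf_apply_of_not_sameCycle hi
  have hinv_in : ∀ i, ψ.SameCycle p i → c⁻¹ i = ψ⁻¹ i := by
    intro i hi
    rw [Equiv.Perm.inv_eq_iff_eq, Equiv.Perm.inv_def,
      hcin _ (Equiv.Perm.sameCycle_symm_apply_right.2 hi), Equiv.apply_symm_apply]
  have hinv_out : ∀ i, ¬ ψ.SameCycle p i → c⁻¹ i = i := by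
    intro i hi
    rw [Equiv.Perm.inv_eq_iff_eq, hcout _ hi]
  have hψinv : ∀ i, a (ψ⁻¹ i) = a p + a q + d p - b i := by
    intro i
    have h1 := hψ (ψ⁻¹ i)
    rw [Equiv.Perm.inv_def, Equiv.apply_symm_apply] at h1
    rw [h1]; abel
  refine ⟨(c⁻¹ * Equiv.swap p q : Equiv.Perm ι).trans a, c.trans b, fun i => ?_⟩
  simp only [Equiv.trans_apply, Equiv.Perm.mul_apply]
  by_cases hip : i = p
  · subst hip
    rw [Equiv.swap_apply_left, hinv_out _ hc, hcin _ (Equiv.Perm.SameCycle.refl _ _), hψ]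
    abel
  by_cases hiq : i = q
  · subst hiq
    rw [Equiv.swap_apply_right, hcout _ hc, hinv_in _ (Equiv.Perm.SameCycle.refl _ _), hψinv,
      ← sub_eq_zero, ← sub_eq_zero.2 hsum]
    abel
  rw [Equiv.swap_apply_of_ne_of_ne hip hiq]
  by_cases hi : ψ.SameCycle p i
  · rw [hcin _ hi, hinv_in _ hi, hψ, hψinv, hd i hip hiq]
    abel
  · rw [hcout _ hi, hinv_out _ hi, hd i hip hiq]

/-- Changing two entries of a difference of two bijections, with their sum preserved, gives again
a difference of two bijections. -/
lemma representable_exchange {ι G : Type*} [Finite ι] [DecidableEq ι] [AddCommGroup G]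
    {p q : ι} (hpq : p ≠ q) (d : ι → G) (a b : ι ≃ G)
    (hd : ∀ i, i ≠ p → i ≠ q → d i = b i - a i)
    (hsum : d p + d q = (b p - a p) + (b q - a q)) :
    ∃ a' b' : ι ≃ G, ∀ i, d i = b' i - a' i := by
  have hsum' : a p + a q + d p + d q = b p + b q := by
    rw [add_assoc, hsum]; abel
  let ψ : Equiv.Perm ι := (a.trans (Equiv.subLeft (a p + a q + d p))).trans b.symm
  have hψ : ∀ i, b (ψ i) = a p + a q + d p - a i := by
    intro i
    simp [ψ]
  by_cases hc : ψ.SameCycle p q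
  · refine representable_of_not_sameCycle hpq d a ((Equiv.swap p q).trans b) ?_ ?_
      (Equiv.swap p q * ψ) ?_ (not_sameCycle_swap_mul hpq ψ hc)
    · intro i hip hiq
      rw [Equiv.trans_apply, Equiv.swap_apply_of_ne_of_ne hip hiq, hd i hip hiq]
    · simp only [Equiv.trans_apply, Equiv.swap_apply_left, Equiv.swap_apply_right]
      rw [hsum', add_comm]
    · intro i
      simp only [Equiv.trans_apply, Equiv.Perm.mul_apply, Equiv.swap_apply_self]
      exact hψ i
  · exact representable_of_not_sameCycle hpq d a b hd hsum' ψ hψ hc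

/-- Hall's theorem for an arbitrary finite abelian group. -/
lemma representable_of_sum_eq_zero {ι G : Type*} [Fintype ι] [DecidableEq ι] [AddCommGroup G]
    (e : ι ≃ G) (s : ι → G) (hs : ∑ i, s i = 0) :
    ∃ a b : ι ≃ G, ∀ i, s i = b i - a i := by
  let o : ι := e.symm 0
  -- The entries in `T` are already those of `s`, and `o` carries the compensating entry.
  have key : ∀ T : Finset ι, o ∉ T → ∃ a b : ι ≃ G, ∀ i,
      (if i = o then -∑ j ∈ T, s j else if i ∈ T then s i else 0) = b i - a i := by
    intro T
    induction T using Finset.induction_on with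
    | empty =>
      intro _
      exact ⟨e, e, fun i => by simp⟩
    | insert t T ht ih =>
      intro ho
      rw [Finset.mem_insert, not_or] at ho
      obtain ⟨a, b, hab⟩ := ih ho.2
      refine representable_exchange ho.1 _ a b ?_ ?_
      · intro i hio hit
        rw [← hab i]
        simp [hio, hit]
      · rw [← hab o, ← hab t]
        simp [Ne.symm ho.1, ht, Finset.sum_insert ht]
  obtain ⟨a, b, hab⟩ := key (Finset.univ.erase o) (by simp)
  refine ⟨a, b, fun i => ?_⟩
  rw [← hab i]
  by_cases hi : i = o
  · have h := Finset.add_sum_erase Finset.univ s (Finset.mem_univ o)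
    rw [hs] at h
    rw [if_pos hi, hi, eq_neg_of_add_eq_zero_left h]
  · simp [hi]

/-- Hall 1952 specialized to `F_2^k`: any zero-sum sequence
`s_1, …, s_{2^k}` of elements of `F_2^k` can be written as `s i = a i - b i`
for two bijections (permutations) `a b : Fin (2^k) → F_2^k`. -/
theorem hall_zero_sum_difference_of_permutations (k : ℕ)
    (s : Fin (2 ^ k) → (Fin k → ZMod 2)) (hs : ∑ i, s i = 0) :
    ∃ a b : Fin (2 ^ k) → (Fin k → ZMod 2),
      Function.Bijective a ∧ Function.Bijective b ∧
      ∀ i, s i = a i - b i := by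
  have e : Fin (2 ^ k) ≃ (Fin k → ZMod 2) := Fintype.equivOfCardEq (by simp [ZMod.card])
  obtain ⟨a, b, h⟩ := representable_of_sum_eq_zero e s hs
  exact ⟨b, a, b.bijective, a.bijective, h⟩
end

section
/- Let G be a finite multiset of vectors from F_2^k in which every vector of F_2^k occurs at least 2m times, for a positive integer m. Then for any sequence R of m·2^k requests (vectors in F_2^k), one can serve R from G: there exist pairwise disjoint sub-multisets S_1, ..., S_{m·2^k} of G, each of size at most 2, such that the sum of the elements of S_i equals the i-th request, for every i. -/
/-!
The vectors `2 • (F_2^k)` suffice for any `2^k` requests; splitting the requests into `m` blocks of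
size `2^k` then gives the theorem.

For one block, the key fact is M. Hall's theorem on differences of permutations
(`exists_equiv_sub_eq`): in a finite abelian group `A`, given `d l` for `l` in an index set of the
same size as `A` and an index `j`, there are two enumerations `p`, `q` of `A` with
`q l - p l = d l` for all `l ≠ j`. In characteristic two this means that the pairs `{p l, q l}`,
which are disjoint in `2 • A`, serve all requests but one. Translating both enumerations by the same
vector does not change the differences, so one may further assume `p j = d j`, and the last request
is served by the singleton `{p j}`.

Hall's theorem is proved by prescribing one difference after the other
(`exists_equiv_sub_eq_step`). To change the difference at `i` to `e`, sacrificing that at `j`, put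
`C = p i + p j + e` and let `ρ` be the permutation of `A` with `q (p⁻¹ (ρ x)) = C - x`. Moving `p`
backwards along the `ρ`-cycle of `p j` and `q` forwards along it preserves all differences, except
that `C - p j` takes the place of `q i`, as desired. This works when `p i` lies outside that cycle,
which can be arranged by exchanging `q i` and `q j` if necessary, because this multiplies `ρ` by a
transposition and hence splits a cycle containing both `p i` and `p j`.
-/

open Equiv Equiv.Perm

/-- If the orbit of `y` closes up after `T` steps without having met `x`, then `x` is not in the
cycle of `y`. -/
lemma not_sameCycle_of_pow_apply_eq {A : Type*} [Finite A] (τ : Perm A) {x y : A} (hxy : x ≠ y)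
    {T : ℕ} (hT : 0 < T) (hy : (τ ^ T) y = y) (h : ∀ t, 0 < t → t < T → (τ ^ t) y ≠ x) :
    ¬ τ.SameCycle y x := by
  intro hs
  obtain ⟨n, hn⟩ := hs.exists_nat_pow_eq
  have h1 : (τ ^ n) y = (τ ^ (n % T)) y := by
    have h2 : ∀ s : ℕ, ((τ ^ T) ^ s) y = y := by
      intro s
      induction s with
      | zero => simp
      | succ s ih => rw [pow_succ, Perm.mul_apply, hy, ih]
    conv_lhs => rw [← Nat.mod_add_div n T, pow_add, pow_mul, Perm.mul_apply, h2]
  rw [h1] at hn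
  rcases Nat.eq_zero_or_pos (n % T) with h0 | h0
  · rw [h0] at hn
    exact hxy hn.symm
  · exact h _ h0 (Nat.mod_lt _ hT) hn

/-- Multiplying by a transposition splits a cycle containing both of its points. -/
lemma not_sameCycle_or_swap_mul {A : Type*} [Finite A] [DecidableEq A] (ρ : Perm A) {x y : A}
    (hxy : x ≠ y) : ¬ ρ.SameCycle y x ∨ ¬ (swap x y * ρ).SameCycle y x := by
  classical
  by_cases hs : ρ.SameCycle y x
  · right
    obtain ⟨n, hn⟩ := hs.exists_nat_pow_eq
    have hex : ∃ n : ℕ, (ρ ^ n) y = x := ⟨n, hn⟩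
    -- `T` is the first time at which the orbit of `y` meets `x`.
    set T := Nat.find hex with hTdef
    have hTx : (ρ ^ T) y = x := Nat.find_spec hex
    have hmin : ∀ t, t < T → (ρ ^ t) y ≠ x := fun t ht => Nat.find_min hex ht
    have hT : 0 < T := by
      rcases Nat.eq_zero_or_pos T with h0 | h0
      · rw [h0] at hTx
        exact absurd hTx.symm hxy
      · exact h0
    -- The orbit cannot return to `y` earlier, for it would then reach `x` sooner.
    have hminy : ∀ t, 0 < t → t < T → (ρ ^ t) y ≠ y := by
      intro t ht htT hy
      apply hmin (T - t) (by omega)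
      calc (ρ ^ (T - t)) y = (ρ ^ (T - t)) ((ρ ^ t) y) := by rw [hy]
        _ = x := by rw [← Perm.mul_apply, ← pow_add, Nat.sub_add_cancel htT.le, hTx]
    have hagree : ∀ t, t < T → ((swap x y * ρ) ^ t) y = (ρ ^ t) y := by
      intro t
      induction t with
      | zero => simp
      | succ t ih =>
        intro ht
        have h1 := hmin (t + 1) ht
        have h2 := hminy (t + 1) (by omega) ht
        rw [pow_succ', Perm.mul_apply] at h1 h2
        rw [pow_succ', Perm.mul_apply, ih (by omega), Perm.mul_apply, pow_succ', Perm.mul_apply,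
          swap_apply_of_ne_of_ne h1 h2]
    apply not_sameCycle_of_pow_apply_eq _ hxy hT
    · obtain ⟨s, hs⟩ : ∃ s, T = s + 1 := ⟨T - 1, by omega⟩
      rw [hs] at hTx ⊢
      rw [pow_succ', Perm.mul_apply, hagree s (by omega), Perm.mul_apply]
      rw [pow_succ', Perm.mul_apply] at hTx
      rw [hTx, swap_apply_left]
    · intro t _ ht
      rw [hagree t ht]
      exact hmin t ht
  · exact Or.inl hs

/-- The exchange step when `p i` is not in the `ρ`-cycle of `p j`. -/
lemma exists_equiv_sub_eq_step_of_not_sameCycle {ι A : Type*} [AddCommGroup A] [Finite A]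
    [DecidableEq ι] (p q : ι ≃ A) {i j : ι} (e : A) (ρ : Perm A)
    (hρ : ∀ x, q (p.symm (ρ x)) = p i + p j + e - x) (hs : ¬ ρ.SameCycle (p j) (p i)) :
    ∃ p' q' : ι ≃ A, q' i - p' i = e ∧ ∀ l, l ≠ i → l ≠ j → q' l - p' l = q l - p l := by
  classical
  let c := ρ.cycleOf (p j)
  have hc_out : ∀ x, ¬ ρ.SameCycle (p j) x → c x = x := fun x hx =>
    cycleOf_apply_of_not_sameCycle hx
  have hc_in : ∀ x, ρ.SameCycle (p j) x → c x = ρ x := fun x hx => hx.cycleOf_apply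
  have hc_in' : ∀ x, ρ.SameCycle (p j) x → c.symm x = ρ.symm x := by
    intro x hx
    rw [Equiv.symm_apply_eq, hc_in, Equiv.apply_symm_apply]
    exact Perm.sameCycle_symm_apply_right.2 hx
  have hc_out' : ∀ x, ¬ ρ.SameCycle (p j) x → c.symm x = x := by
    intro x hx
    rw [Equiv.symm_apply_eq, hc_out x hx]
  -- The transposition keeps the old value `q i`, which is freed at `i`, for the index `j`.
  refine ⟨p.trans c.symm, ((swap i j).trans p).trans (c.trans (p.symm.trans q)), ?_, ?_⟩
  · simp only [Equiv.trans_apply, swap_apply_left]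
    rw [hc_out' _ hs, hc_in _ (SameCycle.refl _ _), hρ]
    abel
  · intro l hi hj
    simp only [Equiv.trans_apply, swap_apply_of_ne_of_ne hi hj]
    by_cases hl : ρ.SameCycle (p j) (p l)
    · rw [hc_in _ hl, hc_in' _ hl, hρ]
      have h := hρ (ρ.symm (p l))
      rw [Equiv.apply_symm_apply, Equiv.symm_apply_apply] at h
      rw [h]
      abel
    · rw [hc_out _ hl, hc_out' _ hl, Equiv.symm_apply_apply]

/-- Any single difference can be prescribed at the expense of that at `j`, the others being kept. -/
lemma exists_equiv_sub_eq_step {ι A : Type*} [AddCommGroup A] [Finite A]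
    (p q : ι ≃ A) {i j : ι} (hij : i ≠ j) (e : A) :
    ∃ p' q' : ι ≃ A, q' i - p' i = e ∧ ∀ l, l ≠ i → l ≠ j → q' l - p' l = q l - p l := by
  classical
  let ρ : Perm A := (Equiv.subLeft (p i + p j + e)).trans (q.symm.trans p)
  rcases not_sameCycle_or_swap_mul ρ (p.injective.ne hij) with h | h
  · exact exists_equiv_sub_eq_step_of_not_sameCycle p q e ρ (by intro x; simp [ρ]) h
  · obtain ⟨p', q', h1, h2⟩ := exists_equiv_sub_eq_step_of_not_sameCycle p ((swap i j).trans q)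
      e (swap (p i) (p j) * ρ) (by
        intro x
        have h3 : p.symm (swap (p i) (p j) (ρ x)) = swap i j (p.symm (ρ x)) := by
          rw [Equiv.symm_apply_eq, p.injective.map_swap, Equiv.apply_symm_apply]
        rw [Perm.mul_apply, h3, Equiv.trans_apply, swap_apply_self]
        simp [ρ]) h
    refine ⟨p', q', h1, fun l hi hj => ?_⟩
    rw [h2 l hi hj, Equiv.trans_apply, swap_apply_of_ne_of_ne hi hj]

/-- M. Hall's theorem: in a finite abelian group, all but one of the differences of two enumerations
can be prescribed arbitrarily. -/
lemma exists_equiv_sub_eq {ι A : Type*} [AddCommGroup A] [Finite A] [Fintype ι]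
    (f : ι ≃ A) (j : ι) (d : ι → A) :
    ∃ p q : ι ≃ A, ∀ l, l ≠ j → q l - p l = d l := by
  classical
  have key : ∀ s : Finset ι, ∃ p q : ι ≃ A, ∀ l ∈ s, l ≠ j → q l - p l = d l := by
    intro s
    induction s using Finset.induction_on with
    | empty => exact ⟨f, f, by simp⟩
    | insert i s his ih =>
      obtain ⟨p, q, h⟩ := ih
      by_cases hij : i = j
      · refine ⟨p, q, fun l hl hlj => ?_⟩
        rcases Finset.mem_insert.1 hl with rfl | hl
        · exact absurd hij hlj
        · exact h l hl hlj
      · obtain ⟨p', q', h1, h2⟩ := exists_equiv_sub_eq_step p q hij (d i)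
        refine ⟨p', q', fun l hl hlj => ?_⟩
        rcases Finset.mem_insert.1 hl with rfl | hl
        · exact h1
        · rw [h2 l (fun hh => his (hh ▸ hl)) hlj, h l hl hlj]
  obtain ⟨p, q, h⟩ := key Finset.univ
  exact ⟨p, q, fun l => h l (Finset.mem_univ l)⟩

/-- Two copies of an elementary abelian 2-group `A` serve any `|A|` requests. -/
lemma exists_serve_block {ι A : Type*} [AddCommGroup A] [Fintype A] [Fintype ι]
    (h2 : ∀ a : A, a + a = 0) (f : ι ≃ A) (d : ι → A) :
    ∃ S : ι → Multiset A, ∑ l, S l ≤ 2 • (Finset.univ : Finset A).val ∧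
      ∀ l, (S l).card ≤ 2 ∧ (S l).sum = d l := by
  classical
  let j : ι := f.symm 0
  obtain ⟨p₀, q₀, h₀⟩ := exists_equiv_sub_eq f j d
  -- Translate both enumerations by the same vector so that `p j` equals the request `d j`.
  obtain ⟨p, q, hj, h⟩ : ∃ p q : ι ≃ A, p j = d j ∧ ∀ l, l ≠ j → q l - p l = d l := by
    refine ⟨p₀.trans (Equiv.addRight (d j - p₀ j)), q₀.trans (Equiv.addRight (d j - p₀ j)), ?_, ?_⟩
    · simp
    · intro l hl
      simpa using h₀ l hl
  refine ⟨fun l => if l = j then {p l} else {p l} + {q l}, ?_, fun l => ?_⟩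
  · have hsum : ∀ r : ι ≃ A, ∑ l, ({r l} : Multiset A) = (Finset.univ : Finset A).val := by
      intro r
      rw [Equiv.sum_comp r (fun a => ({a} : Multiset A)), Finset.sum_multiset_singleton]
    calc ∑ l, (if l = j then ({p l} : Multiset A) else {p l} + {q l})
        ≤ ∑ l, (({p l} : Multiset A) + {q l}) := by
          apply Finset.sum_le_sum
          intro l _
          split_ifs
          · exact Multiset.le_add_right _ _
          · exact le_rfl
      _ = 2 • (Finset.univ : Finset A).val := by
          rw [Finset.sum_add_distrib, hsum, hsum, two_nsmul]
  · dsimp only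
    split_ifs with hl
    · subst hl
      simpa using hj
    · refine ⟨by simp, ?_⟩
      have hp : -p l = p l := neg_eq_of_add_eq_zero_left (h2 _)
      rw [← h l hl, sub_eq_add_neg, hp, Multiset.sum_add, Multiset.sum_singleton,
        Multiset.sum_singleton, add_comm]

/-- if a multiset `G` of vectors of `F_2^k` contains every vector
at least `2m` times (`m > 0`), then any sequence of `m·2^k` requests can be
served from `G` by pairwise disjoint recovery sets of size at most 2
(disjointness encoded by `∑ i, S i ≤ G`). -/
theorem serve_with_recovery_sets_of_size_le_two (k m : ℕ) (hm : 0 < m)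
    (G : Multiset (Fin k → ZMod 2))
    (hG : ∀ e : Fin k → ZMod 2, 2 * m ≤ G.count e)
    (R : Fin (m * 2 ^ k) → (Fin k → ZMod 2)) :
    ∃ S : Fin (m * 2 ^ k) → Multiset (Fin k → ZMod 2),
      (∑ i, S i) ≤ G ∧ ∀ i, Multiset.card (S i) ≤ 2 ∧ (S i).sum = R i := by
  have h2 : ∀ a : Fin k → ZMod 2, a + a = 0 := fun a => funext fun _ => CharTwo.add_self_eq_zero _
  have f : Fin (2 ^ k) ≃ (Fin k → ZMod 2) := Fintype.equivOfCardEq (by simp [ZMod.card])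
  choose T hT hT' using fun b : Fin m =>
    exists_serve_block h2 f (fun l => R (finProdFinEquiv (b, l)))
  refine ⟨fun i => T (finProdFinEquiv.symm i).1 (finProdFinEquiv.symm i).2, ?_, fun i => ?_⟩
  · calc ∑ i, T (finProdFinEquiv.symm i).1 (finProdFinEquiv.symm i).2
        = ∑ b, ∑ l, T b l := by
          rw [Equiv.sum_comp finProdFinEquiv.symm (fun x : Fin m × Fin (2 ^ k) => T x.1 x.2),
            Fintype.sum_prod_type]
      _ ≤ ∑ _b : Fin m, 2 • (Finset.univ : Finset (Fin k → ZMod 2)).val :=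
          Finset.sum_le_sum fun b _ => hT b
      _ ≤ G := by
          rw [Multiset.le_iff_count]
          intro a
          have h1 : Multiset.count a (Finset.univ : Finset (Fin k → ZMod 2)).val = 1 :=
            Multiset.count_eq_one_of_mem Finset.univ.nodup (Finset.mem_univ a)
          have := hG a
          rw [Finset.sum_const, Finset.card_univ, Fintype.card_fin, Multiset.count_nsmul,
            Multiset.count_nsmul, h1]
          omega
  · have := hT' (finProdFinEquiv.symm i).1 (finProdFinEquiv.symm i).2
    simpa only [Prod.mk.eta, Equiv.apply_symm_apply] using this
end

section
/- ('PIR is locally hardest') Let m be a positive integer, r ∈ F_2^k nonzero, and G a multiset of vectors from F_2^k containing each nonzero vector of F_2^k with multiplicity at least 2m. Let t_rP(G) be the maximal number v such that v copies of r can be served from G by pairwise disjoint recovery sets. Then for every request sequence R of length t_rP(G) in which at most m·2^k requests differ from r (and all requests are nonzero), R can be served from G. -/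
/-!
Write `V = F_2^k`. Adjoining `2m` zero vectors to `G` changes nothing, and then `G` splits as a
remainder `G'` plus `2m` copies of all of `V`. The latter part is a disjoint union of `m * 2^k`
pairs `{x, x + r}`, each of which is a recovery set for `r`. Removing one such pair lowers the
number of copies of `r` that can be served by at most one (`greedy_pair`): the two parts containing
`x` and `x + r` either coincide, or can be merged after deleting these two vectors. Hence `G'` still
serves `t - m * 2^k` copies of `r` (`greedy`).

It remains to serve an arbitrary sequence of `m * 2^k` requests, containing all those that differ
from `r`, from `2m` copies of each nonzero vector; this splits into `m` blocks of `2^k` requests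
(`serve_block`). For one block `d : V → V`, M. Hall's theorem on differences in abelian groups
gives, for all but one index, values `a i` which are distinct and for which the `a i + d i` are also
distinct (`hall`). Request `i` is served by `{a i, a i + d i}` without its zeros. After a
translation, the last request is itself the value missed by `a`, so it is served by a singleton.
-/

/-! ### Distinct values with distinct translates -/

section Hall

variable {ι V : Type*} [DecidableEq ι] [AddCommGroup V] [Fintype V] [DecidableEq V]

/-- Hall's exchange argument. The sums `a i + d i` are distinct on `T` except that `p` may collide
with one other index `q`, and the value `y` is free. Moving `q` to `y` frees `a q` and may create
one new collision, of `q` with a further index. The sum of the free value and the collision value is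
always `s`. The set `W` records the values that have been free; by `hW` and `hWp` the index that
has to move next never sits in `W`, so `W` grows and the procedure ends. -/
lemma hall_exchange (d : ι → V) (s : V) (T : Finset ι) (n : ℕ) :
    ∀ (a : ι → V) (p : ι) (y : V) (W : Finset V),
      Fintype.card V ≤ W.card + n → Set.InjOn a T → p ∈ T →
      (∀ i ∈ T, ∀ j ∈ T, i ≠ p → j ≠ p → a i + d i = a j + d j → i = j) →
      (∀ i ∈ T, a i ≠ y) → y ∈ W → a p + d p + y = s →
      (∀ i ∈ T, a i ∈ W → s - (a i + d i) ∈ W) →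
      (∀ i ∈ T, i ≠ p → a i ∈ W → s - (a i + d i) ≠ y) →
      ∃ b : ι → V, Set.InjOn b T ∧ Set.InjOn (fun i => b i + d i) T := by
  induction n with
  | zero =>
    intro a p y W hc ha hp hinj hy hyW hs hW hWp
    have hu : W = Finset.univ :=
      Finset.eq_univ_of_card W (le_antisymm (Finset.card_le_univ W) (by simpa using hc))
    refine ⟨a, ha, ?_⟩
    -- Every value lies in `W`, so no index other than `p` has the collision value `s - y`.
    have key : ∀ i ∈ T, i ≠ p → a i + d i ≠ a p + d p := by
      intro i hi hip h
      apply hWp i hi hip (by simp [hu])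
      rw [h, ← hs]; abel
    intro i hi j hj hij
    by_cases h1 : i = p
    · by_cases h2 : j = p
      · rw [h1, h2]
      · subst h1; exact absurd hij.symm (key j hj h2)
    · by_cases h2 : j = p
      · subst h2; exact absurd hij (key i hi h1)
      · exact hinj i hi j hj h1 h2 hij
  | succ n ih =>
    intro a p y W hc ha hp hinj hy hyW hs hW hWp
    by_cases hcol : ∃ q ∈ T, q ≠ p ∧ a q + d q = a p + d p
    · obtain ⟨q, hq, hqp, hqv⟩ := hcol
      have hqW : a q ∉ W := by
        intro h
        apply hWp q hq hqp h
        rw [hqv, ← hs]; abel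
      refine ih (Function.update a q y) q (a q) (insert (a q) W) ?_ ?_ hq ?_ ?_ ?_ ?_ ?_ ?_
      · rw [Finset.card_insert_of_notMem hqW]; omega
      · intro i hi j hj hij
        by_cases h1 : i = q <;> by_cases h2 : j = q
        · rw [h1, h2]
        · subst h1
          simp [Function.update_of_ne h2] at hij
          exact absurd hij.symm (hy j hj)
        · subst h2
          simp [Function.update_of_ne h1] at hij
          exact absurd hij (hy i hi)
        · rw [Function.update_of_ne h1, Function.update_of_ne h2] at hij
          exact ha hi hj hij
      · intro i hi j hj h1 h2 hij
        rw [Function.update_of_ne h1, Function.update_of_ne h2] at hij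
        by_cases h3 : i = p
        · by_cases h4 : j = p
          · rw [h3, h4]
          · subst h3
            exact absurd (hinj j hj q hq h4 hqp (by rw [hqv, hij])) h2
        · by_cases h4 : j = p
          · subst h4
            exact absurd (hinj i hi q hq h3 hqp (by rw [hqv, hij])) h1
          · exact hinj i hi j hj h3 h4 hij
      · intro i hi h
        by_cases h1 : i = q
        · subst h1
          simp at h
          exact hy i hi h.symm
        · rw [Function.update_of_ne h1] at h
          exact h1 (ha hi hq h)
      · simp
      · rw [Function.update_self, ← hs, ← hqv]; abel
      · intro i hi h
        by_cases h1 : i = q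
        · subst h1
          rw [Function.update_self]
          have : s - (y + d i) = a i := by rw [← hs, ← hqv]; abel
          rw [this]; simp
        · rw [Function.update_of_ne h1] at h ⊢
          rcases Finset.mem_insert.1 h with h | h
          · exact absurd (ha hi hq h) h1
          · exact Finset.mem_insert_of_mem (hW i hi h)
      · intro i hi h1 h h2
        rw [Function.update_of_ne h1] at h h2
        rcases Finset.mem_insert.1 h with h | h
        · exact absurd (ha hi hq h) h1
        · exact hqW (h2 ▸ hW i hi h)
    · push Not at hcol
      refine ⟨a, ha, ?_⟩
      intro i hi j hj hij
      by_cases h1 : i = p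
      · by_cases h2 : j = p
        · rw [h1, h2]
        · subst h1; exact absurd hij.symm (hcol j hj h2)
      · by_cases h2 : j = p
        · subst h2; exact absurd hij (hcol i hi h1)
        · exact hinj i hi j hj h1 h2 hij

/-- Hall's theorem, in the form that prescribes all but one of the differences of two
permutations of a finite abelian group. -/
lemma hall (d : ι → V) (T : Finset ι) (hT : T.card + 1 ≤ Fintype.card V) :
    ∃ b : ι → V, Set.InjOn b T ∧ Set.InjOn (fun i => b i + d i) T := by
  induction T using Finset.induction_on with
  | empty => exact ⟨0, by simp, by simp⟩
  | insert f T hf ih =>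
    rw [Finset.card_insert_of_notMem hf] at hT
    obtain ⟨a, ha, hc⟩ := ih (by omega)
    -- Two values are still free: one for `f`, and one to start the exchange.
    have h1 : 1 < (T.image a)ᶜ.card := by
      rw [Finset.card_compl]
      have := Finset.card_image_le (s := T) (f := a)
      omega
    obtain ⟨x, hx, y, hy, hxy⟩ := Finset.one_lt_card.1 h1
    simp only [Finset.mem_compl, Finset.mem_image, not_exists, not_and] at hx hy
    have hne : ∀ i ∈ T, i ≠ f := fun i hi h => hf (h ▸ hi)
    have hup : ∀ i ∈ T, Function.update a f x i = a i :=
      fun i hi => Function.update_of_ne (hne i hi) _ _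
    refine hall_exchange d (x + d f + y) (insert f T) (Fintype.card V) (Function.update a f x) f y
      {x, y} (by omega) ?_ (by simp) ?_ ?_ (by simp) (by simp) ?_ ?_
    · intro i hi j hj hij
      rcases Finset.mem_insert.1 hi with h1 | h1 <;> rcases Finset.mem_insert.1 hj with h3 | h3
      · rw [h1, h3]
      · rw [h1, Function.update_self, hup j h3] at hij
        exact absurd hij.symm (hx j h3)
      · rw [h3, Function.update_self, hup i h1] at hij
        exact absurd hij (hx i h1)
      · rw [hup i h1, hup j h3] at hij
        exact ha h1 h3 hij
    · intro i hi j hj h1 h2 hij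
      have hi := Finset.mem_of_mem_insert_of_ne hi h1
      have hj := Finset.mem_of_mem_insert_of_ne hj h2
      rw [hup i hi, hup j hj] at hij
      exact hc hi hj hij
    · intro i hi
      rcases Finset.mem_insert.1 hi with rfl | hi
      · simpa using hxy
      · rw [hup i hi]; exact hy i hi
    · intro i hi h
      rcases Finset.mem_insert.1 hi with rfl | hi
      · simp
      · rw [hup i hi] at h
        simp [hx i hi, hy i hi] at h
    · intro i hi h1 h
      have hi := Finset.mem_of_mem_insert_of_ne hi h1
      rw [hup i hi] at h
      simp [hx i hi, hy i hi] at h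

end Hall

/-! ### Serving arbitrary requests by recovery sets of size at most two -/

section Serve

variable {V : Type*} [AddCommGroup V] [DecidableEq V]

/-- The multiset `{x}` with zeros discarded: `{x}` for `x ≠ 0`, and empty for `x = 0`. -/
def nzSingle (x : V) : Multiset V := if x = 0 then 0 else {x}

lemma nzSingle_sum (x : V) : (nzSingle x).sum = x := by
  unfold nzSingle; split_ifs with h <;> simp [h]

variable [Fintype V]

/-- The multiset containing each nonzero vector exactly once. -/
def nzAll (V : Type*) [AddCommGroup V] [Fintype V] [DecidableEq V] : Multiset V :=
  ∑ x : V, nzSingle x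

lemma count_nzAll (e : V) : (nzAll V).count e = if e = 0 then 0 else 1 := by
  have h : ∀ x : V, (nzSingle x).count e = if e = x then (if e = 0 then 0 else 1) else 0 := by
    intro x
    unfold nzSingle
    split_ifs <;> simp_all
  simp [nzAll, Multiset.count_sum', h]

lemma univ_eq_nzAll : (Finset.univ : Finset V).val = nzAll V + {0} := by
  ext e
  rw [Multiset.count_add, count_nzAll, Multiset.count_singleton,
    Multiset.count_eq_one_of_mem Finset.univ.nodup (Finset.mem_univ e)]
  split_ifs <;> simp

lemma sum_nzSingle_le {ι : Type*} (a : ι → V) (T : Finset ι) (ha : Set.InjOn a T) :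
    ∑ i ∈ T, nzSingle (a i) ≤ nzAll V := by
  rw [← Finset.sum_image (f := nzSingle) ha]
  exact Finset.sum_le_sum_of_subset (Finset.subset_univ _)

/-- In a group of exponent two, any `|V|` requests can be served from two copies of each nonzero
vector. -/
lemma serve_block (h2 : ∀ x : V, x + x = 0) (d : V → V) :
    ∃ S : V → Multiset V, (∑ i, S i) ≤ 2 • nzAll V ∧ ∀ i, (S i).sum = d i := by
  obtain ⟨b, hb, hc⟩ := hall d (Finset.univ.erase (0 : V)) (by
    rw [Finset.card_erase_of_mem (Finset.mem_univ _), Finset.card_univ]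
    have : 0 < Fintype.card V := Fintype.card_pos
    omega)
  have hmiss : ∃ z, z ∉ (Finset.univ.erase (0 : V)).image b := by
    by_contra! h
    have h3 := Finset.card_le_card (fun z _ => h z : (Finset.univ : Finset V) ⊆ _)
    have h4 := Finset.card_image_le (s := Finset.univ.erase (0 : V)) (f := b)
    rw [Finset.card_erase_of_mem (Finset.mem_univ _)] at h4
    have : 0 < (Finset.univ : Finset V).card := Fintype.card_pos
    omega
  obtain ⟨z, hz⟩ := hmiss
  simp only [Finset.mem_image, Finset.mem_erase, Finset.mem_univ, and_true, not_exists,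
    not_and] at hz
  -- Translate by `d 0 - z`, so that the value missed by `b` becomes the request `d 0`.
  let a : V → V := fun i => if i = 0 then d 0 else b i + (d 0 - z)
  let c : V → V := fun i => if i = 0 then 0 else (b i + d i) + (d 0 - z)
  have ha : Function.Injective a := by
    intro i j hij
    by_cases h1 : i = 0 <;> by_cases h3 : j = 0
    · rw [h1, h3]
    · simp only [a, h1, h3, if_true, if_false] at hij
      exact absurd (by rw [← sub_eq_zero] at hij ⊢; rw [← neg_eq_zero, ← hij]; abel) (hz j h3)
    · simp only [a, h1, h3, if_true, if_false] at hij
      exact absurd (by rw [← sub_eq_zero] at hij ⊢; rw [← hij]; abel) (hz i h1)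
    · simp only [a, h1, h3, if_false] at hij
      exact hb (by simpa using h1) (by simpa using h3) (add_right_cancel hij)
  have hcinj : Set.InjOn c (Finset.univ.erase (0 : V)) := by
    intro i hi j hj hij
    have h1 : i ≠ 0 := by simpa using hi
    have h3 : j ≠ 0 := by simpa using hj
    simp only [c, h1, h3, if_false] at hij
    exact hc hi hj (add_right_cancel hij)
  refine ⟨fun i => nzSingle (a i) + nzSingle (c i), ?_, ?_⟩
  · rw [Finset.sum_add_distrib, two_nsmul]
    refine add_le_add (sum_nzSingle_le a _ ha.injOn) ?_
    rw [← Finset.sum_erase (a := (0 : V)) Finset.univ (by simp [c, nzSingle])]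
    exact sum_nzSingle_le c _ hcinj
  · intro i
    rw [Multiset.sum_add, nzSingle_sum, nzSingle_sum]
    by_cases h1 : i = 0
    · simp [a, c, h1]
    · simp only [a, c, h1, if_false]
      have : b i + (d 0 - z) + (b i + d i + (d 0 - z))
          = (b i + (d 0 - z)) + (b i + (d 0 - z)) + d i := by abel
      rw [this, h2, zero_add]

end Serve

/-! ### Using the pairs `{x, x + r}` greedily -/

section Greedy

variable {V : Type*} [AddCommGroup V]

/-- Removing a pair with sum `r` costs at most one of the recovery sets for `r`. -/
lemma greedy_pair {r x y : V} (hxy : x + y = r)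
    (P : Multiset (Multiset V)) (hP : ∀ s ∈ P, s.sum = r) (H : Multiset V)
    (hle : P.sum ≤ x ::ₘ y ::ₘ H) :
    ∃ Q : Multiset (Multiset V), (∀ s ∈ Q, s.sum = r) ∧ Q.sum ≤ H ∧ P.card ≤ Q.card + 1 := by
  -- `U` collects the vectors which are not used by `P`.
  obtain ⟨U, hU⟩ := Multiset.le_iff_exists_add.1 hle
  have hx : x ∈ P.sum + U := hU ▸ Multiset.mem_cons_self _ _
  rcases Multiset.mem_add.1 hx with hx | hx
  · obtain ⟨s, hs, hxs⟩ := Multiset.mem_join.1 (show x ∈ P.join from hx)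
    obtain ⟨P, rfl⟩ := Multiset.exists_cons_of_mem hs
    obtain ⟨s, rfl⟩ := Multiset.exists_cons_of_mem hxs
    rw [Multiset.sum_cons, Multiset.cons_add, Multiset.cons_add, Multiset.cons_inj_right] at hU
    have hy : y ∈ s + P.sum + U := hU ▸ Multiset.mem_cons_self _ _
    rw [Multiset.mem_add, Multiset.mem_add] at hy
    have hP' : ∀ s ∈ P, s.sum = r := fun s hs => hP s (Multiset.mem_cons_of_mem hs)
    rcases hy with (hy | hy) | hy
    · obtain ⟨s, rfl⟩ := Multiset.exists_cons_of_mem hy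
      rw [Multiset.cons_add, Multiset.cons_add, Multiset.cons_inj_right] at hU
      refine ⟨P, hP', ?_, by simp⟩
      rw [hU, add_right_comm]; exact Multiset.le_add_left _ _
    · obtain ⟨s', hs', hys⟩ := Multiset.mem_join.1 (show y ∈ P.join from hy)
      obtain ⟨P, rfl⟩ := Multiset.exists_cons_of_mem hs'
      obtain ⟨s', rfl⟩ := Multiset.exists_cons_of_mem hys
      rw [Multiset.sum_cons, Multiset.cons_add, Multiset.add_cons, Multiset.cons_add,
        Multiset.cons_inj_right] at hU
      refine ⟨(s + s') ::ₘ P, ?_, ?_, by simp⟩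
      · intro u hu
        rcases Multiset.mem_cons.1 hu with rfl | hu
        · have e1 := hP (x ::ₘ s) (Multiset.mem_cons_self _ _)
          have e2 := hP' (y ::ₘ s') (Multiset.mem_cons_self _ _)
          rw [Multiset.sum_cons] at e1 e2
          rw [Multiset.sum_add]
          have : s.sum + s'.sum = (x + s.sum) + (y + s'.sum) - (x + y) := by abel
          rw [this, e1, e2, hxy]; abel
        · exact hP' u (Multiset.mem_cons_of_mem hu)
      · rw [hU, Multiset.sum_cons, ← add_assoc]; exact Multiset.le_add_right _ _
    · obtain ⟨U, rfl⟩ := Multiset.exists_cons_of_mem hy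
      rw [Multiset.add_cons, Multiset.cons_inj_right] at hU
      refine ⟨P, hP', ?_, by simp⟩
      rw [hU, add_right_comm]; exact Multiset.le_add_left _ _
  · obtain ⟨U, rfl⟩ := Multiset.exists_cons_of_mem hx
    rw [Multiset.add_cons, Multiset.cons_inj_right] at hU
    have hy : y ∈ P.sum + U := hU ▸ Multiset.mem_cons_self _ _
    rcases Multiset.mem_add.1 hy with hy | hy
    · obtain ⟨s, hs, hys⟩ := Multiset.mem_join.1 (show y ∈ P.join from hy)
      obtain ⟨P, rfl⟩ := Multiset.exists_cons_of_mem hs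
      obtain ⟨s, rfl⟩ := Multiset.exists_cons_of_mem hys
      rw [Multiset.sum_cons, Multiset.cons_add, Multiset.cons_add, Multiset.cons_inj_right] at hU
      refine ⟨P, fun s hs => hP s (Multiset.mem_cons_of_mem hs), ?_, by simp⟩
      rw [hU, add_right_comm]; exact Multiset.le_add_left _ _
    · obtain ⟨U, rfl⟩ := Multiset.exists_cons_of_mem hy
      rw [Multiset.add_cons, Multiset.cons_inj_right] at hU
      exact ⟨P, hP, hU ▸ Multiset.le_add_right _ _, by simp⟩

lemma greedy (h2 : ∀ x : V, x + x = 0) {r : V} (B : Multiset V) :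
    ∀ (P : Multiset (Multiset V)) (_ : ∀ s ∈ P, s.sum = r) (H : Multiset V)
      (_ : P.sum ≤ (B.map fun x => ({x, x + r} : Multiset V)).sum + H),
    ∃ Q : Multiset (Multiset V),
      (∀ s ∈ Q, s.sum = r) ∧ Q.sum ≤ H ∧ P.card ≤ Q.card + B.card := by
  induction B using Multiset.induction_on with
  | empty => intro P hP H hle; exact ⟨P, hP, by simpa using hle, by simp⟩
  | cons x B ih =>
    intro P hP H hle
    obtain ⟨Q, hQ, hQle, hQc⟩ := greedy_pair (r := r) (x := x) (y := x + r)
      (by rw [← add_assoc, h2, zero_add]) P hP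
      ((B.map fun x => ({x, x + r} : Multiset V)).sum + H) (by
        simpa [Multiset.insert_eq_cons, Multiset.cons_add] using hle)
    obtain ⟨Q', hQ', hle', hc'⟩ := ih Q hQ H hQle
    exact ⟨Q', hQ', hle', by rw [Multiset.card_cons]; omega⟩

end Greedy

/-- An indexed family of distinct members, counted with multiplicity, of a multiset `P` that is
large enough. -/
lemma exists_family {ι α : Type*} [DecidableEq ι] (T : Finset ι) :
    ∀ P : Multiset (Multiset α), T.card ≤ P.card →
      ∃ F : ι → Multiset α, (∀ i ∈ T, F i ∈ P) ∧ ∑ i ∈ T, F i ≤ P.sum := by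
  induction T using Finset.induction_on with
  | empty => intro P _; exact ⟨0, by simp, by simp⟩
  | insert f T hf ih =>
    intro P hP
    rw [Finset.card_insert_of_notMem hf] at hP
    obtain ⟨s, hs⟩ := Multiset.card_pos_iff_exists_mem.1 (by omega : 0 < P.card)
    obtain ⟨P, rfl⟩ := Multiset.exists_cons_of_mem hs
    obtain ⟨F, hF, hle⟩ := ih P (by rw [Multiset.card_cons] at hP; omega)
    have hup : ∀ i ∈ T, Function.update F f s i = F i :=
      fun i hi => Function.update_of_ne (fun h : i = f => hf (h ▸ hi)) _ _
    refine ⟨Function.update F f s, ?_, ?_⟩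
    · intro i hi
      rcases Finset.mem_insert.1 hi with rfl | hi
      · simp
      · rw [hup i hi]; exact Multiset.mem_cons_of_mem (hF i hi)
    · rw [Finset.sum_insert hf, Finset.sum_congr rfl hup, Function.update_self,
        Multiset.sum_cons]
      exact add_le_add_right hle s


/-- "PIR is locally hardest": let `m > 0`, `r ≠ 0`, and let `G`
contain every nonzero vector with multiplicity at least `2m`. If `t` is the
maximal number of copies of `r` servable from `G` by pairwise disjoint
recovery sets, then every request sequence of length `t` of nonzero requests,
at most `m·2^k` of which differ from `r`, can be served from `G`. -/
theorem pir_locally_hardest (k m : ℕ) (hm : 0 < m)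
    (r : Fin k → ZMod 2) (hr : r ≠ 0)
    (G : Multiset (Fin k → ZMod 2))
    (hG : ∀ e : Fin k → ZMod 2, e ≠ 0 → 2 * m ≤ G.count e)
    (t : ℕ)
    (ht : IsGreatest
      {v : ℕ | ∃ S : Fin v → Multiset (Fin k → ZMod 2),
        (∑ i, S i) ≤ G ∧ ∀ i, (S i).sum = r} t)
    (R : Fin t → (Fin k → ZMod 2)) (hRnz : ∀ i, R i ≠ 0)
    (hRr : (Finset.univ.filter (fun i => R i ≠ r)).card ≤ m * 2 ^ k) :
    ∃ S : Fin t → Multiset (Fin k → ZMod 2),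
      (∑ i, S i) ≤ G ∧ ∀ i, (S i).sum = R i := by
  classical
  have h2 : ∀ x : Fin k → ZMod 2, x + x = 0 := fun x => by
    ext i; exact CharTwo.add_self_eq_zero _
  have hcardV : Fintype.card (Fin k → ZMod 2) = 2 ^ k := by simp [ZMod.card]
  set N := nzAll (Fin k → ZMod 2) with hN
  have hNG : (2 * m) • N ≤ G := by
    rw [Multiset.le_iff_count]
    intro e
    rw [Multiset.count_nsmul, count_nzAll]
    split_ifs with he
    · simp
    · simpa using hG e he
  obtain ⟨H, rfl⟩ := Multiset.le_iff_exists_add.1 hNG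
  obtain ⟨⟨S₀, hS₀, hS₀r⟩, -⟩ := ht
  -- What remains of the multiset serves `t - m * 2 ^ k` copies of `r`.
  obtain ⟨Q, hQ, hQH, hQc⟩ : ∃ Q : Multiset (Multiset (Fin k → ZMod 2)),
      (∀ s ∈ Q, s.sum = r) ∧ Q.sum ≤ H ∧ t ≤ Q.card + m * 2 ^ k := by
    have hpairs : ((Finset.univ : Finset (Fin k → ZMod 2)).val.map
        fun x => ({x, x + r} : Multiset (Fin k → ZMod 2))).sum = 2 • (N + {0}) := by
      have e1 : ∑ x : Fin k → ZMod 2, ({x} : Multiset (Fin k → ZMod 2)) = N + {0} := by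
        rw [← univ_eq_nzAll, Finset.sum_multiset_singleton]
      have e2 : ∑ x : Fin k → ZMod 2, ({x + r} : Multiset (Fin k → ZMod 2)) = N + {0} := by
        rw [← e1]
        exact Equiv.sum_comp (Equiv.addRight r)
          (fun x => ({x} : Multiset (Fin k → ZMod 2)))
      change ∑ x : Fin k → ZMod 2, (({x} : Multiset (Fin k → ZMod 2)) + {x + r}) = _
      rw [Finset.sum_add_distrib, e1, e2, two_nsmul]
    obtain ⟨Q, hQ, hQle, hQc⟩ := greedy h2 (r := r)
      (m • (Finset.univ : Finset (Fin k → ZMod 2)).val) (Finset.univ.val.map S₀)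
      (by
        intro s hs
        obtain ⟨i, -, rfl⟩ := Multiset.mem_map.1 hs
        exact hS₀r i) H (by
        rw [Multiset.map_nsmul, Multiset.sum_nsmul, hpairs, ← mul_nsmul, nsmul_add]
        refine le_trans hS₀ ?_
        exact add_le_add_left (Multiset.le_add_right _ _) H)
    refine ⟨Q, hQ, hQle, ?_⟩
    simpa [ZMod.card] using hQc
  obtain ⟨A, hRA, -, hA⟩ := Finset.exists_subsuperset_card_eq
    (Finset.filter_subset (fun i => R i ≠ r) Finset.univ) (n := min t (m * 2 ^ k))
    (le_min (by simpa using Finset.card_le_univ (Finset.univ.filter (fun i => R i ≠ r))) hRr)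
    (by simp)
  -- The requests outside `A` are all equal to `r`.
  obtain ⟨F, hFQ, hF⟩ := exists_family Aᶜ Q (by
    rw [Finset.card_compl, Fintype.card_fin]; omega)
  obtain ⟨g⟩ : Nonempty (A ↪ Fin m × (Fin k → ZMod 2)) :=
    Function.Embedding.nonempty_of_card_le (by
      rw [Fintype.card_prod, Fintype.card_fin, hcardV, Fintype.card_coe, hA]
      exact min_le_right _ _)
  have hblock := fun j : Fin m => serve_block h2
    (fun x => Function.extend g (fun i => R i) (fun _ => r) (j, x))
  choose E hE hEs using hblock
  let S : Fin t → Multiset (Fin k → ZMod 2) := fun i =>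
    if h : i ∈ A then E (g ⟨i, h⟩).1 (g ⟨i, h⟩).2 else F i
  refine ⟨S, ?_, ?_⟩
  · rw [← Finset.sum_add_sum_compl A]
    refine add_le_add ?_ (le_trans (le_of_eq ?_) (hF.trans hQH))
    · rw [← Finset.sum_coe_sort A]
      calc ∑ i : A, S i = ∑ i : A, E (g i).1 (g i).2 :=
            Finset.sum_congr rfl fun i _ => by simp [S]
        _ = ∑ p ∈ Finset.univ.map g, E p.1 p.2 :=
            (Finset.sum_map Finset.univ g (fun p => E p.1 p.2)).symm
        _ ≤ ∑ p : Fin m × (Fin k → ZMod 2), E p.1 p.2 :=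
            Finset.sum_le_sum_of_subset (Finset.subset_univ _)
        _ = ∑ j : Fin m, ∑ x, E j x := Fintype.sum_prod_type _
        _ ≤ ∑ _j : Fin m, 2 • N := Finset.sum_le_sum fun j _ => hE j
        _ = (2 * m) • N := by simp [mul_nsmul]
    · exact Finset.sum_congr rfl fun i hi => by
        simp [S, Finset.mem_compl.1 hi]
  · intro i
    by_cases h : i ∈ A
    · simp only [S, h, dif_pos]
      rw [hEs]
      exact g.injective.extend_apply _ _ (⟨i, h⟩ : A)
    · simp only [S, h, dif_neg, not_false_eq_true]
      rw [hQ _ (hFQ i (Finset.mem_compl.2 h))]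
      by_contra hne
      exact h (hRA (by simpa using fun h' => hne h'.symm))
end
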